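/- Fix n ≥ 2 and ε > 0. The number of pairs (a,b) of integers with A ≤ |a| ≤ 2A, B ≤ |b| ≤ 2B such that t^n + a t + b is reducible over ℚ is at most ε·AB for all sufficiently large A, B. -/

import Mathlib

/-!
Let `p ≡ 1 mod n` be prime. If `p ∣ a` then `t ^ n + a t + b` reduces mod `p` to the
binomial `t ^ n + b`, which is irreducible over `𝔽_p` for at least `(p - 1) / n` residues `b`
(`exists_many_irreducible_binomials`). A monic integer polynomial that is irreducible mod `p` is
irreducible over `ℚ`, so the reducible pairs `(a, b)` occupy at most a proportion
`1 - 1 / (2 n p)` of the residue classes mod `p` (`card_reducibleResidues_le`).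

Combining finitely many such primes by the Chinese remainder theorem (`sieve`), once `A` and `B`
exceed the product of the primes, the number of reducible pairs in the box is at most
`36 A B ∏ (1 - 1 / (2 n p))`. The sum of `1 / p` over primes `p ≡ 1 mod n` diverges
(`not_summable_one_div_prime_residue`), so the product can be made smaller than any given positive
number. Using only pairs with `a ≡ 0` makes an equidistribution theorem for the factorization types
of trinomials unnecessary: a saving of order `1 / p` at each prime is enough.
-/

open Polynomial

/-! ### Divergence of the sum of reciprocals of primes congruent to 1 -/

open ArithmeticFunction.vonMangoldt Filter Topology in
/-- The strong form of Dirichlet's theorem for the residue class `1`. `LSeries_residueClass_lower_bound`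
says that `∑ Λ(k) / k ^ (1 + s)` over `k ≡ 1 mod n` grows at least like `1 / (φ(n) s)` as `s → 0⁺`. If
`∑ 1 / p` converged, then, since `s log p ≤ p ^ s`, dominated convergence would force `s` times that
sum to tend to `0`. -/
lemma not_summable_one_div_prime_residue (n : ℕ) [NeZero n] :
    ¬ Summable fun p : ℕ ↦ if p.Prime ∧ (p : ZMod n) = 1 then (1 : ℝ) / p else 0 := by
  intro H
  obtain ⟨C, hC⟩ := LSeries_residueClass_lower_bound (q := n) (a := 1) isUnit_one
  have hφ : 0 < (n.totient : ℝ)⁻¹ := inv_pos.mpr (mod_cast n.totient.pos_of_neZero)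
  have hsum := H.add (summable_residueClass_non_primes_div (q := n) 1)
  have hpos : ∀ᶠ s : ℝ in 𝓝[>] 0, 0 < s ∧ s ≤ 1 := by
    filter_upwards [Ioc_mem_nhdsGT (zero_lt_one' ℝ)] with s hs using hs
  have hid : Tendsto (fun s : ℝ ↦ s) (𝓝[>] 0) (𝓝 0) := tendsto_nhdsWithin_of_tendsto_nhds tendsto_id
  -- the terms are dominated by `1 / p` at primes and by `Λ(k) / k` at the other prime powers
  have key : Tendsto (fun s : ℝ ↦ ∑' k : ℕ, s * (residueClass (1 : ZMod n) k / (k : ℝ) ^ (1 + s)))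
      (𝓝[>] 0) (𝓝 (∑' _ : ℕ, (0 : ℝ))) := by
    refine tendsto_tsum_of_dominated_convergence hsum (fun k ↦ ?_) ?_
    · rcases Nat.eq_zero_or_pos k with rfl | hk
      · simp
      have hk' : (0 : ℝ) < k := by exact_mod_cast hk
      have h1 : Tendsto (fun s : ℝ ↦ (k : ℝ) ^ (1 + s)) (𝓝[>] 0) (𝓝 ((k : ℝ) ^ (1 + (0 : ℝ)))) :=
        tendsto_const_nhds.rpow (tendsto_const_nhds.add hid) (Or.inl hk'.ne')
      have h2 := hid.mul ((tendsto_const_nhds (x := residueClass (1 : ZMod n) k)).div h1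
        (by positivity))
      simpa using h2
    · filter_upwards [hpos] with s hs k
      have hnn := residueClass_nonneg (1 : ZMod n) k
      rcases Nat.eq_zero_or_pos k with rfl | hk
      · simp
      have hk' : (1 : ℝ) ≤ k := by exact_mod_cast hk
      rw [Real.norm_of_nonneg (by have := hs.1; positivity),
        Real.rpow_add (by positivity), Real.rpow_one]
      have hks : (1 : ℝ) ≤ (k : ℝ) ^ s := Real.one_le_rpow hk' hs.1.le
      by_cases hp : k.Prime
      · by_cases h1 : (k : ZMod n) = 1
        · have hv : residueClass (1 : ZMod n) k = Real.log k := by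
            simp [residueClass, h1, ArithmeticFunction.vonMangoldt_apply_prime hp]
          have hl := Real.log_le_rpow_div (x := k) (by positivity) hs.1
          rw [le_div_iff₀ hs.1] at hl
          simp only [hp, h1, and_self, if_true, hv, zero_div, add_zero]
          rw [← mul_div_assoc, div_le_div_iff₀ (by positivity) (by positivity)]
          nlinarith
        · simp [residueClass, h1, hp]
      · simp only [hp, false_and, if_false, zero_add]
        rw [← mul_div_assoc]
        gcongr
        · nlinarith [hs.2]
        · nlinarith
  rw [tsum_zero] at key
  have hlow : Tendsto (fun s : ℝ ↦ (n.totient : ℝ)⁻¹ - s * C) (𝓝[>] 0)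
      (𝓝 ((n.totient : ℝ)⁻¹ - 0 * C)) := tendsto_const_nhds.sub (hid.mul_const C)
  have := le_of_tendsto_of_tendsto hlow key (by
    filter_upwards [hpos] with s hs
    rw [tsum_mul_left]
    have h := hC (x := 1 + s) ⟨by linarith [hs.1], by linarith [hs.2]⟩
    rw [add_sub_cancel_left] at h
    have h' := mul_le_mul_of_nonneg_left h hs.1.le
    rwa [mul_sub, mul_div_cancel₀ _ hs.1.ne'] at h')
  linarith

/-! ### Irreducible binomials over prime fields -/

/-- Let `α` be a root of an irreducible factor of degree `d`, and `ζ = c ^ ((p - 1) / n)`. Then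
`α ^ p = ζ α`, so `α = α ^ (p ^ d) = ζ ^ d α`; hence `ζ ^ d = 1`, `n ∣ d`, and the factor is the whole
polynomial. -/
lemma irreducible_X_pow_sub_C {p n : ℕ} [Fact p.Prime] (hn : 0 < n) (hnp : n ∣ p - 1) (c : ZMod p)
    (hc0 : c ≠ 0) (hc : IsPrimitiveRoot (c ^ ((p - 1) / n)) n) :
    Irreducible (X ^ n - C c : (ZMod p)[X]) := by
  have hdeg : (X ^ n - C c : (ZMod p)[X]).natDegree = n := natDegree_X_pow_sub_C
  have hmonic : (X ^ n - C c : (ZMod p)[X]).Monic := monic_X_pow_sub_C c hn.ne'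
  obtain ⟨f, hf, hdvd⟩ := exists_irreducible_of_natDegree_pos (hdeg.symm ▸ hn)
  have : Fact (Irreducible f) := ⟨hf⟩
  set ζ := c ^ ((p - 1) / n)
  set α := AdjoinRoot.root f
  have hα : α ^ n = algebraMap _ _ c := by
    have h0 : aeval α (X ^ n - C c : (ZMod p)[X]) = 0 := by
      obtain ⟨g, hg⟩ := hdvd
      rw [hg, map_mul, AdjoinRoot.aeval_eq, AdjoinRoot.mk_self, zero_mul]
    simpa [sub_eq_zero] using h0
  have hα0 : α ≠ 0 := by
    rintro h
    rw [h, zero_pow hn.ne', eq_comm, map_eq_zero] at hα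
    exact hc0 hα
  have hp1 : 1 ≤ p := (Fact.out : p.Prime).one_le
  have hfrob : α ^ p = algebraMap _ _ ζ * α := by
    calc α ^ p = α ^ (n * ((p - 1) / n) + 1) := by rw [Nat.mul_div_cancel' hnp, Nat.sub_add_cancel hp1]
      _ = _ := by rw [pow_succ, pow_mul, hα, map_pow]
  have hiter : ∀ j : ℕ, α ^ p ^ j = algebraMap _ _ (ζ ^ j) * α := by
    intro j
    induction j with
    | zero => simp
    | succ j ih =>
      rw [pow_succ, pow_mul, ih, mul_pow, hfrob, ← map_pow, ZMod.pow_card, ← mul_assoc, ← map_mul,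
        pow_succ]
  have : Module.Finite (ZMod p) (AdjoinRoot f) := (AdjoinRoot.powerBasis hf.ne_zero).finite
  have : Finite (AdjoinRoot f) := Module.finite_of_finite (ZMod p)
  let _ := Fintype.ofFinite (AdjoinRoot f)
  have hcard : Fintype.card (AdjoinRoot f) = p ^ f.natDegree := by
    rw [Module.card_eq_pow_finrank (K := ZMod p), ZMod.card,
      (AdjoinRoot.powerBasis hf.ne_zero).finrank, AdjoinRoot.powerBasis_dim]
  have h1 : ζ ^ f.natDegree = 1 := by
    have h2 := hiter f.natDegree
    rw [← hcard, FiniteField.pow_card] at h2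
    have h3 := mul_right_cancel₀ hα0 ((one_mul α).trans h2)
    exact (algebraMap (ZMod p) (AdjoinRoot f)).injective (by rw [← h3, map_one])
  have hle : n ≤ f.natDegree := Nat.le_of_dvd hf.natDegree_pos (hc.dvd_of_pow_eq_one _ h1)
  exact ((associated_of_dvd_of_natDegree_le hdvd hmonic.ne_zero (hdeg.le.trans hle)).irreducible_iff).mp hf

/-- The set `G` consists of the `-g ^ (n j + 1)` with `0 ≤ j < (p - 1) / n`, where `g` generates
`(ZMod p)ˣ`. -/
lemma exists_many_irreducible_binomials {p n : ℕ} [Fact p.Prime] (hn : 0 < n) (hnp : n ∣ p - 1) :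
    ∃ G : Finset (ZMod p), p - 1 = n * G.card ∧
      ∀ c ∈ G, Irreducible (X ^ n + C c : (ZMod p)[X]) := by
  classical
  obtain ⟨g, hg⟩ := IsCyclic.exists_generator (α := (ZMod p)ˣ)
  have hord : orderOf g = p - 1 := by
    rw [orderOf_eq_card_of_forall_mem_zpowers hg, Nat.card_eq_fintype_card, ZMod.card_units]
  have hp1 : 0 < p - 1 := Nat.sub_pos_of_lt (Fact.out : p.Prime).one_lt
  obtain ⟨m, hm⟩ := hnp
  have hm0 : 0 < m := by
    rcases Nat.eq_zero_or_pos m with rfl | h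
    · omega
    · exact h
  have hdiv : (p - 1) / n = m := by rw [hm, Nat.mul_div_cancel_left _ hn]
  refine ⟨(Finset.range m).image fun j ↦ -((g ^ (n * j + 1) : (ZMod p)ˣ) : ZMod p), ?_, ?_⟩
  · rw [Finset.card_image_of_injOn, Finset.card_range, hm]
    intro i hi j hj hij
    simp only [Finset.coe_range, Set.mem_Iio] at hi hj
    have h1 := Units.ext (neg_injective hij)
    rw [pow_succ, pow_succ, mul_left_inj] at h1
    have h2 : n * i = n * j := pow_injOn_Iio_orderOf (x := g)
      (by rw [hord, hm]; exact Nat.mul_lt_mul_of_pos_left hi hn)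
      (by rw [hord, hm]; exact Nat.mul_lt_mul_of_pos_left hj hn) h1
    exact Nat.eq_of_mul_eq_mul_left hn h2
  · intro c hc
    obtain ⟨j, -, rfl⟩ := Finset.mem_image.mp hc
    rw [map_neg, ← sub_eq_add_neg]
    refine irreducible_X_pow_sub_C hn ⟨m, hm⟩ _ (Units.ne_zero _) ?_
    have hprim : IsPrimitiveRoot (g ^ m) n := by
      have h := IsPrimitiveRoot.orderOf g
      rw [hord] at h
      exact h.pow hp1 (hm.trans (mul_comm _ _))
    -- `n j m = (p - 1) j` is a multiple of the order of `g`, so the power is independent of `j`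
    have : (g ^ (n * j + 1)) ^ m = g ^ m := by
      have : g ^ (n * m) = 1 := by rw [← hm, ← hord, pow_orderOf_eq_one]
      rw [← pow_mul, show (n * j + 1) * m = n * m * j + m by ring, pow_add, pow_mul, this, one_pow,
        one_mul]
    rw [hdiv, ← Units.val_pow_eq_pow_val, this]
    exact IsPrimitiveRoot.coe_units_iff.mpr hprim

/-! ### Reducible residue classes modulo one prime -/

open Classical in
/-- The pairs `(a, b)` mod `p` for which `t ^ n + a t + b` is not irreducible over `ZMod p`. -/
noncomputable def reducibleResidues (n p : ℕ) [NeZero p] : Finset (ZMod p × ZMod p) :=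
  {x | ¬ Irreducible (X ^ n + C x.1 * X + C x.2 : (ZMod p)[X])}

/-- The proportion of reducible residue pairs is at most `1 - 1 / (2 n p)`, because the pairs `(0, b)`
with `t ^ n + b` irreducible are excluded; the bound is stated through `1 - x ≤ exp (-x)` so that the
product over several primes becomes a sum of `1 / p`. -/
lemma card_reducibleResidues_le {p n : ℕ} [Fact p.Prime] (hn : 0 < n) (hnp : n ∣ p - 1) :
    ((reducibleResidues n p).card : ℝ) / p ^ 2 ≤ Real.exp (-(1 / (2 * n) * (1 / p))) := by
  classical
  obtain ⟨G, hG, hirr⟩ := exists_many_irreducible_binomials (p := p) hn hnp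
  have hp2 : (2 : ℝ) ≤ p := by exact_mod_cast (Fact.out : p.Prime).two_le
  have hn' : (0 : ℝ) < n := by exact_mod_cast hn
  have hdisj : Disjoint (reducibleResidues n p) (({0} : Finset (ZMod p)) ×ˢ G) := by
    rw [Finset.disjoint_left]
    rintro ⟨a, b⟩ hx hy
    simp only [reducibleResidues, Finset.mem_filter, Finset.mem_univ, true_and, Finset.mem_product,
      Finset.mem_singleton] at hx hy
    obtain ⟨rfl, hb⟩ := hy
    exact hx (by simpa using hirr b hb)
  have hcard : (reducibleResidues n p).card + G.card ≤ p ^ 2 := by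
    have h := Finset.card_le_univ ((reducibleResidues n p).disjUnion _ hdisj)
    rw [Finset.card_disjUnion, Finset.card_product, Finset.card_singleton, one_mul,
      Fintype.card_prod, ZMod.card] at h
    rwa [pow_two]
  have hcard' : ((reducibleResidues n p).card : ℝ) + G.card ≤ p ^ 2 := by exact_mod_cast hcard
  have hG' : (p : ℝ) - 1 = n * G.card := by
    rw [← Nat.cast_pred (Fact.out : p.Prime).pos]
    exact_mod_cast hG
  -- `p - 1 ≥ p / 2`, hence `|G| ≥ p / (2 n)`
  have hGe : (p : ℝ) / (2 * n) ≤ G.card := by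
    rw [div_le_iff₀ (by positivity)]
    linarith
  calc ((reducibleResidues n p).card : ℝ) / p ^ 2
      ≤ ((p : ℝ) ^ 2 - p / (2 * n)) / p ^ 2 := by
        gcongr
        linarith
    _ = -(1 / (2 * n) * (1 / p) : ℝ) + 1 := by field_simp; ring
    _ ≤ _ := Real.add_one_le_exp _

/-! ### Sieving by several primes -/

lemma card_filter_modEq_le {R : ℝ} {Q : ℕ} (hQ : 0 < Q) (hR : (Q : ℝ) ≤ R) (v : ℤ) :
    ((Finset.filter (fun x : ℤ ↦ x ≡ v [ZMOD Q]) (Finset.Icc (-⌊2 * R⌋) ⌊2 * R⌋)).card : ℝ)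
      ≤ 6 * R / Q := by
  have hQ' : (0 : ℝ) < Q := by exact_mod_cast hQ
  have hR0 : 0 < R := hQ'.trans_le hR
  set N := ⌊2 * R⌋
  have hN : (N : ℝ) ≤ 2 * R := Int.floor_le _
  have hN0 : 0 ≤ N := Int.floor_nonneg.mpr (by positivity)
  have hset : Finset.Icc (-N) N = Finset.Ioc (-N - 1) N := by
    ext; simp only [Finset.mem_Icc, Finset.mem_Ioc]; omega
  have h := Int.Ioc_filter_modEq_card (-N - 1) N (r := Q) (by exact_mod_cast hQ) v
  rw [hset]
  have hcard : ((Finset.filter (fun x : ℤ ↦ x ≡ v [ZMOD Q]) (Finset.Ioc (-N - 1) N)).card : ℚ)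
      ≤ (2 * N + 1) / Q + 1 := by
    rw [← Int.cast_natCast, h, Int.cast_max, Int.cast_zero, max_le_iff]
    have hQq : (0 : ℚ) < Q := by exact_mod_cast hQ
    have hNq : (0 : ℚ) ≤ N := by exact_mod_cast hN0
    refine ⟨?_, by positivity⟩
    push_cast
    have h1 := Int.floor_le (((N : ℚ) - v) / Q)
    have h2 := Int.lt_floor_add_one (((-N - 1 : ℚ) - v) / Q)
    have h3 : (2 * (N : ℚ) + 1) / Q = (N - v) / Q - (-N - 1 - v) / Q := by ring
    rw [h3]
    linarith
  have hcard' : ((Finset.filter (fun x : ℤ ↦ x ≡ v [ZMOD Q]) (Finset.Ioc (-N - 1) N)).card : ℝ)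
      ≤ (2 * N + 1) / Q + 1 := by exact_mod_cast hcard
  refine hcard'.trans ?_
  have hQ1 : (1 : ℝ) ≤ Q := by exact_mod_cast hQ
  rw [div_add_one hQ'.ne']
  gcongr
  linarith

open Finset in
/-- The box `|a| ≤ 2 A`, `|b| ≤ 2 B` meets each residue class of pairs modulo `Q = ∏ p i` in at most
`(6 A / Q) (6 B / Q)` points, and the classes that are bad modulo every `p i` number
`∏ |bad i|`. -/
lemma sieve {ι : Type*} [Fintype ι] [DecidableEq ι] (p : ι → ℕ) [∀ i, Fact (p i).Prime]
    (hinj : Function.Injective p) (bad : ∀ i, Finset (ZMod (p i) × ZMod (p i))) {A B : ℝ}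
    (hA : ((∏ i, p i : ℕ) : ℝ) ≤ A) (hB : ((∏ i, p i : ℕ) : ℝ) ≤ B) {S : Set (ℤ × ℤ)}
    (hS : ∀ x ∈ S, |(x.1 : ℝ)| ≤ 2 * A ∧ |(x.2 : ℝ)| ≤ 2 * B ∧
      ∀ i, ((x.1 : ZMod (p i)), (x.2 : ZMod (p i))) ∈ bad i) :
    (S.ncard : ℝ) ≤ 36 * A * B * ∏ i, ((bad i).card : ℝ) / (p i) ^ 2 := by
  classical
  set Q := ∏ i, p i with hQdef
  have hQ : 0 < Q := Finset.prod_pos fun i _ ↦ (Fact.out : (p i).Prime).pos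
  have hQ' : (0 : ℝ) < Q := by exact_mod_cast hQ
  have hmem : ∀ (R : ℝ) (z : ℤ), |(z : ℝ)| ≤ 2 * R → z ∈ Icc (-⌊2 * R⌋) ⌊2 * R⌋ := by
    intro R z hz
    rw [mem_Icc, ← abs_le, Int.le_floor, Int.cast_abs]
    exact hz
  set box := Icc (-⌊2 * A⌋) ⌊2 * A⌋ ×ˢ Icc (-⌊2 * B⌋) ⌊2 * B⌋ with hbox
  let φ : ℤ × ℤ → ∀ i, ZMod (p i) × ZMod (p i) := fun x i ↦ (x.1, x.2)
  have hsub : S ⊆ ({x ∈ box | φ x ∈ Fintype.piFinset bad} : Finset (ℤ × ℤ)) := by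
    intro x hx
    obtain ⟨h1, h2, h3⟩ := hS x hx
    simp only [coe_filter, Set.mem_ofPred_eq, hbox, mem_product, Fintype.mem_piFinset]
    exact ⟨⟨hmem A _ h1, hmem B _ h2⟩, h3⟩
  -- Chinese remainder theorem: agreement modulo every `p i` is agreement modulo `Q`
  have hcrt : ∀ u v : ℤ, (∀ i, (u : ZMod (p i)) = v) → u ≡ v [ZMOD Q] := by
    intro u v huv
    rw [Int.modEq_iff_dvd, hQdef, Nat.cast_prod]
    refine Fintype.prod_dvd_of_coprime (fun i j hij ↦ ?_) fun i ↦ ?_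
    · exact Nat.isCoprime_iff_coprime.mpr
        ((Nat.coprime_primes Fact.out Fact.out).mpr (hinj.ne hij))
    · exact (ZMod.intCast_eq_intCast_iff_dvd_sub _ _ _).mp (huv i)
  have hfib : ∀ y ∈ Fintype.piFinset bad,
      #{x ∈ ({x ∈ box | φ x ∈ Fintype.piFinset bad} : Finset (ℤ × ℤ)) | φ x = y}
        ≤ ⌊(6 * A / Q) * (6 * B / Q)⌋₊ := by
    intro y _
    rcases Finset.eq_empty_or_nonempty
      {x ∈ ({x ∈ box | φ x ∈ Fintype.piFinset bad} : Finset (ℤ × ℤ)) | φ x = y} with h | ⟨x₀, hx₀⟩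
    · rw [h, card_empty]; exact Nat.zero_le _
    have hx₀' := (mem_filter.mp hx₀).2
    refine Nat.le_floor ?_
    have hsub' : {x ∈ ({x ∈ box | φ x ∈ Fintype.piFinset bad} : Finset (ℤ × ℤ)) | φ x = y} ⊆
        {a ∈ Icc (-⌊2 * A⌋) ⌊2 * A⌋ | a ≡ x₀.1 [ZMOD Q]} ×ˢ
          {b ∈ Icc (-⌊2 * B⌋) ⌊2 * B⌋ | b ≡ x₀.2 [ZMOD Q]} := by
      intro x hx
      simp only [mem_filter, hbox, mem_product] at hx ⊢
      have hφ := hx.2.trans hx₀'.symm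
      exact ⟨⟨hx.1.1.1, hcrt _ _ fun i ↦ congrArg Prod.fst (congrFun hφ i)⟩,
        ⟨hx.1.1.2, hcrt _ _ fun i ↦ congrArg Prod.snd (congrFun hφ i)⟩⟩
    refine (Nat.cast_le.mpr (card_le_card hsub')).trans ?_
    rw [card_product, Nat.cast_mul]
    gcongr
    · exact div_nonneg (by linarith) hQ'.le
    · exact card_filter_modEq_le hQ hA _
    · exact card_filter_modEq_le hQ hB _
  have hmain := card_le_mul_card_image_of_maps_to (f := φ) (t := Fintype.piFinset bad)
    (fun x hx ↦ (mem_filter.mp hx).2) _ hfib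
  have hA0 : 0 ≤ A := hQ'.le.trans hA
  have hB0 : 0 ≤ B := hQ'.le.trans hB
  calc (S.ncard : ℝ) ≤ #({x ∈ box | φ x ∈ Fintype.piFinset bad} : Finset (ℤ × ℤ)) := by
        rw [← Set.ncard_coe_finset]
        exact_mod_cast Set.ncard_le_ncard hsub (Finset.finite_toSet _)
    _ ≤ ⌊(6 * A / Q) * (6 * B / Q)⌋₊ * #(Fintype.piFinset bad) := by exact_mod_cast hmain
    _ ≤ (6 * A / Q) * (6 * B / Q) * #(Fintype.piFinset bad) := by
        gcongr
        exact Nat.floor_le (by positivity)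
    _ = 36 * A * B * ∏ i, ((bad i).card : ℝ) / (p i) ^ 2 := by
        rw [Fintype.card_piFinset, prod_div_distrib, prod_pow, Nat.cast_prod,
          ← Nat.cast_prod p univ, ← hQdef]
        field_simp
        rw [Nat.cast_prod]
        ring

/-! ### Reducible trinomials over the rationals -/

lemma reducible_mod {n p : ℕ} [Fact p.Prime] (hn : 2 ≤ n) (a b : ℤ)
    (h : ¬ Irreducible (X ^ n + C (a : ℚ) * X + C (b : ℚ))) :
    ((a : ZMod p), (b : ZMod p)) ∈ reducibleResidues n p := by
  simp only [reducibleResidues, Finset.mem_filter, Finset.mem_univ, true_and]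
  contrapose! h
  set f : ℤ[X] := X ^ n + C a * X + C b with hf
  have hmonic : f.Monic := by
    rw [hf, add_assoc]
    refine monic_X_pow_add ?_
    exact degree_linear_le.trans_lt (by exact_mod_cast (by omega : 1 < n))
  have hirr : Irreducible f := by
    refine hmonic.irreducible_of_irreducible_map (Int.castRingHom (ZMod p)) f ?_
    simpa [hf] using h
  have := (IsPrimitive.Int.irreducible_iff_irreducible_map_cast hmonic.isPrimitive).mp hirr
  simpa [hf] using this

/-- Fix `n ≥ 2` and `ε > 0`.  For all sufficiently large `A, B`, the number of integer
pairs `(a,b)` with `A ≤ |a| ≤ 2A`, `B ≤ |b| ≤ 2B` such that `t^n + a t + b` is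
reducible over `ℚ` is at most `ε·A·B`. -/
theorem count_reducible_trinomials_small (n : ℕ) (hn : 2 ≤ n) (ε : ℝ) (hε : 0 < ε) :
    ∃ M : ℝ, ∀ A B : ℝ, M ≤ A → M ≤ B →
      (Set.ncard {x : ℤ × ℤ |
          (A ≤ |(x.1 : ℝ)| ∧ |(x.1 : ℝ)| ≤ 2 * A) ∧
          (B ≤ |(x.2 : ℝ)| ∧ |(x.2 : ℝ)| ≤ 2 * B) ∧
          ¬ Irreducible ((X : Polynomial ℚ) ^ n + Polynomial.C (x.1 : ℚ) * X
              + Polynomial.C (x.2 : ℚ))} : ℝ)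
        ≤ ε * A * B := by
  have : NeZero n := ⟨by omega⟩
  have hn' : (0 : ℝ) < n := by exact_mod_cast (by omega : 0 < n)
  have hdiv := (not_summable_iff_tendsto_nat_atTop_of_nonneg
    (fun p ↦ by split_ifs <;> positivity)).mp (not_summable_one_div_prime_residue n)
  -- the threshold makes `exp (-(1 / (2 n)) ∑ 1 / p) ≤ ε / 36`
  obtain ⟨m, hm⟩ := (hdiv.eventually_ge_atTop (2 * n * -Real.log (ε / 36))).exists
  rw [← Finset.sum_filter] at hm
  set T := Finset.filter (fun p : ℕ ↦ p.Prime ∧ (p : ZMod n) = 1) (Finset.range m) with hT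
  have hTp : ∀ i : T, (i : ℕ).Prime ∧ ((i : ℕ) : ZMod n) = 1 := fun i ↦
    (Finset.mem_filter.mp i.2).2
  have : ∀ i : T, Fact (i : ℕ).Prime := fun i ↦ ⟨(hTp i).1⟩
  have hTd : ∀ i : T, n ∣ (i : ℕ) - 1 := fun i ↦ by
    rw [← ZMod.natCast_eq_zero_iff, Nat.cast_pred (hTp i).1.pos, (hTp i).2, sub_self]
  refine ⟨((∏ i : T, (i : ℕ) : ℕ) : ℝ), fun A B hA hB ↦ ?_⟩
  have hAB : 0 ≤ 36 * A * B := by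
    have h0 : (0 : ℝ) ≤ ((∏ i : T, (i : ℕ) : ℕ) : ℝ) := Nat.cast_nonneg _
    have := mul_nonneg (h0.trans hA) (h0.trans hB)
    linarith
  refine (sieve (fun i : T ↦ (i : ℕ)) Subtype.val_injective
    (fun i ↦ reducibleResidues n i) hA hB ?_).trans ?_
  · rintro x ⟨h1, h2, h3⟩
    exact ⟨h1.2, h2.2, fun i ↦ reducible_mod hn _ _ h3⟩
  have hprod : ∏ i : T, ((reducibleResidues n i).card : ℝ) / (i : ℕ) ^ 2 ≤ ε / 36 := by
    calc _ ≤ ∏ i : T, Real.exp (-(1 / (2 * n) * (1 / (i : ℕ)))) :=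
          Finset.prod_le_prod (fun i _ ↦ by positivity) fun i _ ↦
            card_reducibleResidues_le (by omega) (hTd i)
      _ = Real.exp (-(1 / (2 * n) * ∑ p ∈ T, (1 : ℝ) / p)) := by
          rw [← Real.exp_sum, Finset.sum_neg_distrib, ← Finset.mul_sum,
            Finset.sum_coe_sort T (fun p ↦ (1 : ℝ) / p)]
      _ ≤ Real.exp (Real.log (ε / 36)) := by
          rw [Real.exp_le_exp, neg_le, one_div, ← div_eq_inv_mul, le_div_iff₀ (by positivity)]
          linarith
      _ = ε / 36 := Real.exp_log (by positivity)
  calc _ ≤ 36 * A * B * (ε / 36) := mul_le_mul_of_nonneg_left hprod hAB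
    _ = ε * A * B := by ring
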